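/- Orthogonality of consensus-propagation messages meeting at a node (three nodes): let l and l̃ be distinct vertices of the tree G that are both adjacent to a vertex l' (so l, l', l̃ lie in this order on a path of length 2). Then for all rounds i' ≤ i and every inner iteration j ∈ {0,…,J}: ⟨P_{i,j}[l→l'], P_{i',j}[l̃→l']⟩ = 0. -/

import Mathlib

open MeasureTheory SimpleGraph
open scoped RealInnerProductSpace

/-!
A message `P i j l l'` only ever collects data of vertices on the far side of `l` as seen from `l'`,
that is, of vertices joined to `l` by a walk that avoids `l'`. In an acyclic graph distinct
neighbours of `l'` lie in different components once `l'` is removed, so two messages arriving at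
`l'` are sums of data of disjoint sets of vertices.
-/

section Branch

variable {𝓛 : Type*} {G : SimpleGraph 𝓛} {l l' m : 𝓛}

/-- The branch of `G` at `l` as seen from `l'`: the vertices that can be reached from `l` by a walk
avoiding `l'`. For adjacent `l` and `l'` in a tree, these are the vertices on the side of `l` of the
edge joining them. It contains every vertex whose data enter a message from `l` to `l'`. -/
def branch (G : SimpleGraph 𝓛) (l l' : 𝓛) : Set 𝓛 :=
  {x | ∃ p : G.Walk l x, l' ∉ p.support}

theorem self_mem_branch (h : l ≠ l') : l ∈ branch G l l' :=
  ⟨Walk.nil, by simpa using h.symm⟩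

theorem mem_support_of_adj_of_ne (hG : G.IsAcyclic) (hl : G.Adj l l') (hm : G.Adj m l')
    (hne : l ≠ m) (p : G.Walk l m) : l' ∈ p.support := by
  classical
  by_contra hp
  have hpath : (Walk.cons hl.symm p.bypass).IsPath :=
    p.bypass_isPath.cons fun h => hp (p.support_bypass_subset_support h)
  have hml : m = l := by
    simpa using hG.eq_snd_of_adj_start hpath hm.symm (Walk.end_mem_support _)
  exact hne hml.symm

theorem disjoint_branch_of_adj (hG : G.IsAcyclic) (hl : G.Adj l l') (hm : G.Adj m l')
    (hne : l ≠ m) : Disjoint (branch G l l') (branch G m l') := by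
  rw [Set.disjoint_left]
  rintro x ⟨p, hp⟩ ⟨q, hq⟩
  have h := mem_support_of_adj_of_ne hG hl hm hne (p.append q.reverse)
  rw [Walk.mem_support_append_iff, Walk.support_reverse, List.mem_reverse] at h
  exact h.elim hp hq

theorem branch_subset_branch_of_adj (hG : G.IsAcyclic) (hl : G.Adj l l') (hm : G.Adj m l)
    (hne : m ≠ l') : branch G m l ⊆ branch G l l' := by
  rintro x ⟨p, hp⟩
  have hp' : l' ∉ p.support := by
    intro h
    obtain ⟨q, r, rfl⟩ := Walk.mem_support_iff_exists_append.mp h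
    have hq := mem_support_of_adj_of_ne hG hm hl.symm hne q
    exact hp (Walk.mem_support_append_iff q r |>.mpr (.inl hq))
  exact ⟨.cons hm.symm p, by simp [hl.ne', hp']⟩

end Branch

theorem inner_eq_zero_of_mem_addSubmonoid_closure {𝕜 V : Type*} [RCLike 𝕜]
    [SeminormedAddCommGroup V] [InnerProductSpace 𝕜 V] {s t : Set V}
    (h : ∀ v ∈ s, ∀ w ∈ t, inner 𝕜 v w = 0) {v w : V}
    (hv : v ∈ AddSubmonoid.closure s) (hw : w ∈ AddSubmonoid.closure t) : inner 𝕜 v w = 0 := by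
  induction hv using AddSubmonoid.closure_induction with
  | zero => exact inner_zero_left w
  | add v₁ v₂ _ _ h₁ h₂ => rw [inner_add_left, h₁, h₂, add_zero]
  | mem v hv =>
    induction hw using AddSubmonoid.closure_induction with
    | zero => exact inner_zero_right v
    | add w₁ w₂ _ _ h₁ h₂ => rw [inner_add_right, h₁, h₂, add_zero]
    | mem w hw => exact h v hv w hw

/-- Consensus propagation on `G` with `J` inner iterations per round: `P i j l l'` is the message
`P_{i,j}[l→l']` formed from the node data `u i l`. The values of `P` are constrained only for
adjacent `l` and `l'` and for `j ≤ J`. -/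
structure IsConsensusPropagation {𝓛 V : Type*} [DecidableEq 𝓛] [AddCommMonoid V]
    (G : SimpleGraph 𝓛) [G.LocallyFinite] (u : ℕ → 𝓛 → V) (J : ℕ)
    (P : ℕ → ℕ → 𝓛 → 𝓛 → V) : Prop where
  zero : ∀ l l' : 𝓛, G.Adj l l' → P 0 0 l l' = 0
  next_round : ∀ (i : ℕ) (l l' : 𝓛), G.Adj l l' → P (i + 1) 0 l l' = P i J l l'
  step : ∀ (i j : ℕ), j < J → ∀ l l' : 𝓛, G.Adj l l' →
    P i (j + 1) l l' = u i l + ∑ l'' ∈ (G.neighborFinset l).erase l', P i j l'' l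

namespace IsConsensusPropagation

variable {𝓛 V : Type*} [DecidableEq 𝓛] {G : SimpleGraph 𝓛} [G.LocallyFinite]
  {u : ℕ → 𝓛 → V} {J : ℕ} {P : ℕ → ℕ → 𝓛 → 𝓛 → V}

theorem mem_closure_branch [AddCommMonoid V] (hG : G.IsAcyclic)
    (hP : IsConsensusPropagation G u J P) :
    ∀ (i j : ℕ), j ≤ J → ∀ l l' : 𝓛, G.Adj l l' →
      P i j l l' ∈ AddSubmonoid.closure (Set.image2 u Set.univ (branch G l l'))
  | 0, 0, _, l, l', hl => by
    rw [hP.zero l l' hl]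
    exact zero_mem _
  | i + 1, 0, _, l, l', hl => by
    rw [hP.next_round i l l' hl]
    exact mem_closure_branch hG hP i J le_rfl l l' hl
  | i, j + 1, hj, l, l', hl => by
    rw [hP.step i j hj l l' hl]
    refine add_mem (AddSubmonoid.subset_closure ?_) (sum_mem fun m hm => ?_)
    · exact Set.mem_image2_of_mem (Set.mem_univ i) (self_mem_branch hl.ne)
    · obtain ⟨hne, hlm⟩ := Finset.mem_erase.mp hm
      have hml : G.Adj m l := ((mem_neighborFinset ..).mp hlm).symm
      have hsub := branch_subset_branch_of_adj hG hl hml hne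
      exact AddSubmonoid.closure_mono (Set.image2_subset_left hsub)
        (mem_closure_branch hG hP i j (Nat.le_of_succ_le hj) m l hml)
termination_by i j => (i, j)

theorem inner_eq_zero_of_disjoint_branch {𝕜 : Type*} [RCLike 𝕜] [SeminormedAddCommGroup V]
    [InnerProductSpace 𝕜 V] (hG : G.IsAcyclic) (hP : IsConsensusPropagation G u J P)
    (hu : ∀ i i' : ℕ, ∀ l l' : 𝓛, l ≠ l' → inner 𝕜 (u i l) (u i' l') = 0)
    {l l' m m' : 𝓛} (hl : G.Adj l l') (hm : G.Adj m m')
    (hdisj : Disjoint (branch G l l') (branch G m m'))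
    {i i' j j' : ℕ} (hj : j ≤ J) (hj' : j' ≤ J) : inner 𝕜 (P i j l l') (P i' j' m m') = 0 := by
  refine inner_eq_zero_of_mem_addSubmonoid_closure ?_
    (hP.mem_closure_branch hG i j hj l l' hl) (hP.mem_closure_branch hG i' j' hj' m m' hm)
  rintro _ ⟨k, -, x, hx, rfl⟩ _ ⟨k', -, y, hy, rfl⟩
  exact hu k k' x y (hdisj.ne_of_mem hx hy)

end IsConsensusPropagation

theorem consensus_messages_orthogonal_path_three_general
    {𝕜 𝓛 V : Type*} [RCLike 𝕜] [DecidableEq 𝓛] {G : SimpleGraph 𝓛} [G.LocallyFinite]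
    (hG : G.IsAcyclic) [SeminormedAddCommGroup V] [InnerProductSpace 𝕜 V]
    {u : ℕ → 𝓛 → V} (hu : ∀ i i' : ℕ, ∀ l l' : 𝓛, l ≠ l' → inner 𝕜 (u i l) (u i' l') = 0)
    {J : ℕ} {P : ℕ → ℕ → 𝓛 → 𝓛 → V} (hP : IsConsensusPropagation G u J P)
    {l l' lt : 𝓛} (hne : l ≠ lt) (h1 : G.Adj l l') (h2 : G.Adj lt l')
    {i i' j j' : ℕ} (hj : j ≤ J) (hj' : j' ≤ J) :
    inner 𝕜 (P i j l l') (P i' j' lt l') = 0 :=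
  hP.inner_eq_zero_of_disjoint_branch hG hu h1 h2 (disjoint_branch_of_adj hG h1 h2 hne) hj hj'

/-- Orthogonality of consensus-propagation messages meeting at a node
(three nodes): if `l ≠ lt` are both adjacent to `l'` in the tree `G` (so `l, l', lt` lie
in this order on a path of length 2), then for all rounds `i' ≤ i` and inner iterations
`j ≤ J`, `⟪P_{i,j}[l→l'], P_{i',j}[lt→l']⟫ = 0`. -/
theorem consensus_messages_orthogonal_path_three
    {𝓛 : Type*} [Fintype 𝓛] [DecidableEq 𝓛] (G : SimpleGraph 𝓛) [DecidableRel G.Adj]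
    (hG : G.IsTree)
    {V : Type*} [NormedAddCommGroup V] [InnerProductSpace ℝ V]
    (u : ℕ → 𝓛 → V)
    (hu : ∀ i i' : ℕ, ∀ l l' : 𝓛, l ≠ l' → ⟪u i l, u i' l'⟫ = 0)
    (J : ℕ) (P : ℕ → ℕ → 𝓛 → 𝓛 → V)
    (hP00 : ∀ l l' : 𝓛, G.Adj l l' → P 0 0 l l' = 0)
    (hPinit : ∀ (i : ℕ) (l l' : 𝓛), G.Adj l l' → P (i + 1) 0 l l' = P i J l l')
    (hPstep : ∀ (i j : ℕ), j < J → ∀ l l' : 𝓛, G.Adj l l' →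
      P i (j + 1) l l' = u i l + ∑ l'' ∈ (G.neighborFinset l).erase l', P i j l'' l)
    (l l' lt : 𝓛) (hne : l ≠ lt)
    (h1 : G.Adj l l') (h2 : G.Adj lt l')
    (i i' : ℕ) (hii : i' ≤ i) (j : ℕ) (hj : j ≤ J) :
    ⟪P i j l l', P i' j lt l'⟫ = 0 :=
  consensus_messages_orthogonal_path_three_general hG.isAcyclic hu ⟨hP00, hPinit, hPstep⟩ hne h1 h2
    hj hj
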